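/- arXiv:2403.10812 — 3 statements merged into one kernel-verified Lean document; each statement's English description precedes it below -/
import Mathlib

section
/- Let P ∈ ℂ[x₁,…,x_m] be a homogeneous polynomial of degree r. Then for every j with 0 ≤ j ≤ r, the dimension of the ℂ-linear span of the set of all j-th order partial derivatives {∂^α P : |α| = j} (a subspace of the polynomials of degree r−j) equals the dimension of the ℂ-linear span of the set of all (r−j)-th order partial derivatives {∂^α P : |α| = r−j}. -/
/-!
For a polynomial `Q` let `w γ Q = γ! · coeff γ Q`, which is the constant term of `∂^γ Q`. In these
rescaled coefficients differentiation is a plain shift, `w γ (∂^α P) = w (γ + α) P`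
(`scaledCoeff_iterPDeriv`). If `P` is homogeneous of degree `j + k`, then `∂^α P` with `|α| = j` is
determined by its rescaled coefficients in degree `k`, so the derivatives of order `j` span a space
whose dimension is the rank of the matrix `(w (α + β) P)` with `|α| = j`, `|β| = k`
(`finrank_span_iterPDeriv`). Exchanging `j` and `k` transposes this matrix.
-/

open MvPolynomial

/-- Iterated partial derivative `∂^α P`. -/
noncomputable def iterPDeriv (m : ℕ) (α : Fin m → ℕ) :
    MvPolynomial (Fin m) ℂ → MvPolynomial (Fin m) ℂ :=
  (List.ofFn fun i : Fin m => (fun Q => pderiv i Q)^[α i]).foldr (· ∘ ·) id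

/-- Gradient map of a polynomial: `w ↦ (∂P/∂x₁(w), …, ∂P/∂x_m(w))`. -/
noncomputable def gradMap (m : ℕ) (P : MvPolynomial (Fin m) ℂ) :
    (Fin m → ℂ) → Fin m → ℂ :=
  fun w i => eval w (pderiv i P)

/-- Determinant of the Hessian matrix `(∂²P/∂xᵢ∂xⱼ)`. -/
noncomputable def hessDet (m : ℕ) (P : MvPolynomial (Fin m) ℂ) : MvPolynomial (Fin m) ℂ :=
  Matrix.det (Matrix.of fun i j : Fin m => pderiv i (pderiv j P))

/-- Directional derivative `D_v = v₁ ∂/∂x₁ + ⋯ + v_m ∂/∂x_m`. -/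
noncomputable def dirDeriv (m : ℕ) (v : Fin m → ℂ) :
    MvPolynomial (Fin m) ℂ → MvPolynomial (Fin m) ℂ :=
  fun Q => ∑ i : Fin m, v i • pderiv i Q

/-- The rescaled coefficient `γ! · coeff γ Q`, where `γ! = ∏ i, (γ i)!`. -/
noncomputable def scaledCoeff {m : ℕ} (γ : Fin m →₀ ℕ) (Q : MvPolynomial (Fin m) ℂ) : ℂ :=
  coeff γ Q * ∏ i, ((γ i).factorial : ℂ)

lemma scaledCoeff_pderiv {m : ℕ} (γ : Fin m →₀ ℕ) (i : Fin m) (Q : MvPolynomial (Fin m) ℂ) :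
    scaledCoeff γ (pderiv i Q) = scaledCoeff (γ + Finsupp.single i 1) Q := by
  classical
  unfold scaledCoeff
  rw [coeff_pderiv, ← Finset.mul_prod_erase _ _ (Finset.mem_univ i),
    ← Finset.mul_prod_erase _ (fun l : Fin m => (((γ + Finsupp.single i 1 : Fin m →₀ ℕ) l).factorial : ℂ))
      (Finset.mem_univ i)]
  have h : ∏ l ∈ Finset.univ.erase i, (((γ + Finsupp.single i 1 : Fin m →₀ ℕ) l).factorial : ℂ) =
      ∏ l ∈ Finset.univ.erase i, ((γ l).factorial : ℂ) := by
    refine Finset.prod_congr rfl fun l hl => ?_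
    simp [Finsupp.single_eq_of_ne (Finset.ne_of_mem_erase hl)]
  rw [h]
  simp [Nat.factorial_succ]
  ring

lemma scaledCoeff_pderiv_iterate {m : ℕ} (i : Fin m) (a : ℕ) (γ : Fin m →₀ ℕ)
    (Q : MvPolynomial (Fin m) ℂ) :
    scaledCoeff γ ((fun Q => pderiv i Q)^[a] Q) = scaledCoeff (γ + Finsupp.single i a) Q := by
  induction a generalizing Q with
  | zero => simp
  | succ a ih => rw [Function.iterate_succ_apply, ih, scaledCoeff_pderiv, add_assoc,
      ← Finsupp.single_add]

/-- In rescaled coefficients, `∂^α` is the shift by `α`. -/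
lemma scaledCoeff_iterPDeriv {m : ℕ} (α : Fin m → ℕ) (γ : Fin m →₀ ℕ)
    (P : MvPolynomial (Fin m) ℂ) :
    scaledCoeff γ (iterPDeriv m α P) =
      scaledCoeff (γ + Finsupp.equivFunOnFinite.symm α) P := by
  -- Every list of variables is allowed, so that the composition can be unfolded by induction.
  have key : ∀ (l : List (Fin m)) (γ : Fin m →₀ ℕ),
      scaledCoeff γ ((l.map fun i => (fun Q : MvPolynomial (Fin m) ℂ =>
        pderiv i Q)^[α i]).foldr (· ∘ ·) id P) =
      scaledCoeff (γ + (l.map fun i => Finsupp.single i (α i)).sum) P := by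
    intro l
    induction l with
    | nil => simp
    | cons i l ih =>
      intro γ
      simp only [List.map_cons, List.foldr_cons, Function.comp_apply, List.sum_cons]
      rw [scaledCoeff_pderiv_iterate, ih, add_assoc]
  have h := key (List.finRange m) γ
  rw [← List.ofFn_eq_map, ← List.ofFn_eq_map, List.sum_ofFn] at h
  rw [iterPDeriv, h]
  congr 2
  ext l
  simp [Finsupp.finsetSum_apply, Finsupp.single_apply]

lemma prod_factorial_ne_zero {m : ℕ} (γ : Fin m →₀ ℕ) :
    ∏ i, ((γ i).factorial : ℂ) ≠ 0 :=
  Finset.prod_ne_zero_iff.2 fun i _ => by exact_mod_cast (γ i).factorial_ne_zero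

/-- The matrix `(w (α + β) P)` with rows `|α| = j` and columns `|β| = k`, where `w` is
`scaledCoeff`. -/
noncomputable def catalecticant {m : ℕ} (P : MvPolynomial (Fin m) ℂ) (j k : ℕ) :
    Matrix (Finset.piAntidiag (Finset.univ : Finset (Fin m)) j)
      (Finset.piAntidiag (Finset.univ : Finset (Fin m)) k) ℂ :=
  Matrix.of fun α β =>
    scaledCoeff (Finsupp.equivFunOnFinite.symm (α : Fin m → ℕ) +
      Finsupp.equivFunOnFinite.symm (β : Fin m → ℕ)) P

lemma catalecticant_transpose {m : ℕ} (P : MvPolynomial (Fin m) ℂ) (j k : ℕ) :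
    (catalecticant P j k).transpose = catalecticant P k j := by
  ext β α
  simp [catalecticant, add_comm]

/-- The linear map sending a vector `v` to the polynomial homogeneous of degree `k` whose rescaled
coefficients are the entries of `v`. -/
noncomputable def ofScaledCoeff (m k : ℕ) :
    (Finset.piAntidiag (Finset.univ : Finset (Fin m)) k → ℂ) →ₗ[ℂ] MvPolynomial (Fin m) ℂ :=
  ∑ β : Finset.piAntidiag (Finset.univ : Finset (Fin m)) k, (monomial (Finsupp.equivFunOnFinite.symm (β : Fin m → ℕ))) ∘ₗ
    ((∏ i, (((β : Fin m → ℕ) i).factorial : ℂ))⁻¹ • LinearMap.proj β)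

lemma scaledCoeff_ofScaledCoeff {m k : ℕ}
    (v : Finset.piAntidiag (Finset.univ : Finset (Fin m)) k → ℂ)
    (β : Finset.piAntidiag (Finset.univ : Finset (Fin m)) k) :
    scaledCoeff (Finsupp.equivFunOnFinite.symm (β : Fin m → ℕ)) (ofScaledCoeff m k v) = v β := by
  classical
  have h := prod_factorial_ne_zero (Finsupp.equivFunOnFinite.symm (β : Fin m → ℕ))
  simp only [Finsupp.equivFunOnFinite_symm_apply_apply] at h
  simp [scaledCoeff, ofScaledCoeff, coeff_sum, coeff_monomial]
  field_simp

lemma coeff_ofScaledCoeff_of_ne {m k : ℕ}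
    (v : Finset.piAntidiag (Finset.univ : Finset (Fin m)) k → ℂ)
    (γ : Fin m →₀ ℕ) (hγ : ∑ i, γ i ≠ k) : coeff γ (ofScaledCoeff m k v) = 0 := by
  classical
  simp only [ofScaledCoeff, LinearMap.sum_apply, coeff_sum, LinearMap.comp_apply, coeff_monomial]
  refine Finset.sum_eq_zero fun β _ => if_neg ?_
  rintro rfl
  exact hγ (by simpa using (Finset.mem_piAntidiag.1 β.2).1)

lemma ofScaledCoeff_injective (m k : ℕ) : Function.Injective (ofScaledCoeff m k) := by
  intro u v h
  ext β
  rw [← scaledCoeff_ofScaledCoeff u, h, scaledCoeff_ofScaledCoeff]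

/-- `∂^α P` is homogeneous of degree `k`, and its rescaled coefficients in that degree form the row
`α` of the matrix. -/
lemma iterPDeriv_eq_ofScaledCoeff {m j k : ℕ} {P : MvPolynomial (Fin m) ℂ}
    (hP : P.IsHomogeneous (j + k)) (α : Finset.piAntidiag (Finset.univ : Finset (Fin m)) j) :
    iterPDeriv m α P = ofScaledCoeff m k ((catalecticant P j k).row α) := by
  ext γ
  by_cases hγ : ∑ i, γ i = k
  · have h := scaledCoeff_ofScaledCoeff ((catalecticant P j k).row α)
      ⟨γ, by simp [Finset.mem_piAntidiag, hγ]⟩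
    simp only [Finsupp.equivFunOnFinite_symm_coe] at h
    refine mul_right_cancel₀ (prod_factorial_ne_zero γ) ?_
    change scaledCoeff γ _ = scaledCoeff γ _
    rw [h, scaledCoeff_iterPDeriv, add_comm]
    simp [catalecticant, Matrix.row]
  · rw [coeff_ofScaledCoeff_of_ne _ _ hγ]
    refine mul_right_cancel₀ (prod_factorial_ne_zero γ) ?_
    change scaledCoeff γ _ = _
    rw [scaledCoeff_iterPDeriv, scaledCoeff, hP.coeff_eq_zero]
    · simp
    · have hα : ∑ i, (α : Fin m → ℕ) i = j := (Finset.mem_piAntidiag.1 α.2).1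
      rw [Finsupp.degree_eq_sum]
      simp only [Finsupp.add_apply, Finsupp.equivFunOnFinite_symm_apply_apply,
        Finset.sum_add_distrib]
      omega

lemma finrank_span_iterPDeriv {m j k : ℕ} {P : MvPolynomial (Fin m) ℂ}
    (hP : P.IsHomogeneous (j + k)) :
    Module.finrank ℂ (Submodule.span ℂ
      {Q : MvPolynomial (Fin m) ℂ | ∃ α : Fin m → ℕ, (∑ i, α i) = j ∧ Q = iterPDeriv m α P}) =
    (catalecticant P j k).rank := by
  have hset : {Q : MvPolynomial (Fin m) ℂ |
      ∃ α : Fin m → ℕ, (∑ i, α i) = j ∧ Q = iterPDeriv m α P} =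
      ofScaledCoeff m k '' Set.range (catalecticant P j k).row := by
    ext Q
    constructor
    · rintro ⟨α, hα, rfl⟩
      exact ⟨_, ⟨⟨α, by simp [Finset.mem_piAntidiag, hα]⟩, rfl⟩,
        (iterPDeriv_eq_ofScaledCoeff hP _).symm⟩
    · rintro ⟨_, ⟨α, rfl⟩, rfl⟩
      exact ⟨α, (Finset.mem_piAntidiag.1 α.2).1, (iterPDeriv_eq_ofScaledCoeff hP α).symm⟩
  rw [hset, Submodule.span_image, Matrix.rank_eq_finrank_span_row]
  exact (Submodule.equivMapOfInjective _ (ofScaledCoeff_injective m k) _).finrank_eq.symm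

/-- The span of the j-th order partial derivatives of a degree-r homogeneous polynomial
has the same dimension as the span of the (r−j)-th order partial derivatives. -/
theorem dim_span_jth_derivs_eq_dim_span_rsubjth_derivs
    (m r : ℕ) (P : MvPolynomial (Fin m) ℂ) (hP : P.IsHomogeneous r)
    (j : ℕ) (hj : j ≤ r) :
    Module.finrank ℂ
      (Submodule.span ℂ
        {Q : MvPolynomial (Fin m) ℂ | ∃ α : Fin m → ℕ, (∑ i, α i) = j ∧ Q = iterPDeriv m α P}) =
    Module.finrank ℂ
      (Submodule.span ℂ
        {Q : MvPolynomial (Fin m) ℂ | ∃ α : Fin m → ℕ, (∑ i, α i) = r - j ∧ Q = iterPDeriv m α P}) := by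
  obtain ⟨k, rfl⟩ := Nat.exists_eq_add_of_le hj
  rw [Nat.add_sub_cancel_left, finrank_span_iterPDeriv hP,
    finrank_span_iterPDeriv (j := k) (k := j) (by rwa [add_comm]), ← catalecticant_transpose,
    Matrix.rank_transpose]
end

section
/- Let r ≥ 2 and let P, Q ∈ ℂ[x₁,…,x_m] be homogeneous polynomials of degree r such that det(Hess P) is not the zero polynomial, and such that Q(∇P(w)) = P(w)^{r−1} for all w ∈ ℂ^m. Then for all w ∈ ℂ^m one has ∇Q(∇P(w)) = P(w)^{r−2} · w. -/
/-!
Write `Pᵢ = ∂ᵢP` and `Gᵢ = (∂ᵢQ)(P₁, …, P_m)`. Over the infinite field `ℂ` the hypothesis is the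
polynomial identity `Q(P₁, …, P_m) = P ^ (r - 1)`. Applying `∂ⱼ`, the chain rule gives
`∑ᵢ (∂ⱼ∂ᵢP) Gᵢ = (r - 1) P ^ (r - 2) ∂ⱼP`. Since `∂ⱼP` is homogeneous of degree `r - 1`, Euler's
identity says `(r - 1) ∂ⱼP = ∑ᵢ (∂ᵢ∂ⱼP) xᵢ`. As partial derivatives commute, the Hessian of `P`
therefore annihilates the vector `(Gᵢ - P ^ (r - 2) xᵢ)ᵢ`; its determinant is nonzero and the
polynomial ring is a domain, so that vector vanishes.
-/

open MvPolynomial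

theorem pderiv_pderiv_comm {m : ℕ} (i j : Fin m) (P : MvPolynomial (Fin m) ℂ) :
    pderiv i (pderiv j P) = pderiv j (pderiv i P) := by
  -- The commutator of two derivations is a derivation, and this one kills every variable.
  have h : ⁅(pderiv i : Derivation ℂ (MvPolynomial (Fin m) ℂ) _),
      (pderiv j : Derivation ℂ (MvPolynomial (Fin m) ℂ) _)⁆ = 0 := by
    apply derivation_ext
    intro k
    classical
    simp only [Derivation.commutator_apply, pderiv_X, Pi.single_apply, Derivation.zero_apply]
    split_ifs <;> simp
  have h' := DFunLike.congr_fun h P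
  rw [Derivation.commutator_apply, Derivation.zero_apply, sub_eq_zero] at h'
  exact h'

/-- Chain rule for the substitution of polynomials into a polynomial. -/
theorem pderiv_bind₁ {m : ℕ} (f : Fin m → MvPolynomial (Fin m) ℂ) (j : Fin m)
    (Q : MvPolynomial (Fin m) ℂ) :
    pderiv j (bind₁ f Q) = ∑ i, pderiv j (f i) * bind₁ f (pderiv i Q) := by
  induction Q using MvPolynomial.induction_on with
  | C a => simp
  | add p q hp hq => simp [hp, hq, mul_add, Finset.sum_add_distrib]
  | mul_X p k hp =>
    have hX : ∑ i, pderiv j (f i) * (bind₁ f p * bind₁ f (pderiv i (X k))) =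
        bind₁ f p * pderiv j (f k) := by
      rw [Finset.sum_eq_single k]
      · rw [pderiv_X_self, map_one, mul_one, mul_comm]
      · intro i _ hik
        rw [pderiv_X_of_ne hik.symm, map_zero, mul_zero, mul_zero]
      · exact fun h => absurd (Finset.mem_univ k) h
    simp only [map_mul, bind₁_X_right, pderiv_mul, hp, map_add, mul_add,
      Finset.sum_add_distrib, Finset.sum_mul]
    rw [hX]
    refine congrArg (· + _) (Finset.sum_congr rfl fun i _ => ?_)
    rw [mul_assoc]

theorem eval_bind₁_pderiv {m : ℕ} (P Q : MvPolynomial (Fin m) ℂ) (w : Fin m → ℂ) :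
    eval w (bind₁ (fun i => pderiv i P) Q) = eval (gradMap m P w) Q := by
  simp only [eval, eval₂Hom_bind₁]
  rfl

/-- If `Q` is the multiplicative Legendre transform of `P`, i.e. `Q(∇P(w)) = P(w)^(r-1)`,
then `∇Q(∇P(w)) = P(w)^(r-2) • w`. -/
theorem grad_legendre_comp_grad
    (m r : ℕ) (hr : 2 ≤ r) (P Q : MvPolynomial (Fin m) ℂ)
    (hP : P.IsHomogeneous r) (hQ : Q.IsHomogeneous r)
    (hHess : hessDet m P ≠ 0)
    (hLeg : ∀ w : Fin m → ℂ, eval (gradMap m P w) Q = (eval w P) ^ (r - 1)) :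
    ∀ w : Fin m → ℂ, gradMap m Q (gradMap m P w) = (eval w P) ^ (r - 2) • w := by
  have hpoly : bind₁ (fun i => pderiv i P) Q = P ^ (r - 1) := by
    apply MvPolynomial.funext
    intro w
    rw [eval_bind₁_pderiv, hLeg, map_pow]
  have hker : (fun i => bind₁ (fun i => pderiv i P) (pderiv i Q) - P ^ (r - 2) * X i) = 0 := by
    apply Matrix.eq_zero_of_mulVec_eq_zero hHess
    ext1 j
    have h1 := pderiv_bind₁ (fun i => pderiv i P) j Q
    rw [hpoly, pderiv_pow, show r - 1 - 1 = r - 2 by omega] at h1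
    have h2 := (hP.pderiv (i := j)).sum_X_mul_pderiv
    rw [nsmul_eq_mul] at h2
    simp only [Matrix.mulVec, dotProduct, Matrix.of_apply, mul_sub, Finset.sum_sub_distrib,
      Pi.zero_apply]
    rw [← h1, mul_comm (_ : MvPolynomial (Fin m) ℂ) (P ^ (r - 2)), mul_assoc, ← h2,
      sub_eq_zero, Finset.mul_sum]
    refine Finset.sum_congr rfl fun i _ => ?_
    rw [pderiv_pderiv_comm i j]
    ring
  intro w
  ext i
  have h := congrArg (eval w) (sub_eq_zero.mp (congrFun hker i))
  rw [eval_bind₁_pderiv] at h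
  simpa [gradMap] using h
end

section
/- Let P ∈ ℂ[x₁,…,x_m] be a polynomial such that det(Hess P) is not the zero polynomial. Then the image of the gradient map ∇P : ℂ^m → ℂ^m is Zariski dense; concretely, for every polynomial F ∈ ℂ[y₁,…,y_m], if F(∇P(w)) = 0 for all w ∈ ℂ^m, then F is the zero polynomial. -/
/-!
Density of the image says that the partial derivatives `∂P/∂xᵢ` are algebraically independent, and
this is an instance of the Jacobian criterion: in characteristic zero, `m` polynomials in `m`
variables whose Jacobian determinant is nonzero satisfy no nontrivial polynomial relation.

Suppose `F(g₁, …, g_m) = 0`. Differentiating with the chain rule (`pderiv_aeval`) gives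
`∑ⱼ (∂gⱼ/∂xᵢ) · (∂F/∂yⱼ)(g) = 0` for each `i`. Since the Jacobian determinant is nonzero and the
polynomial ring is a domain, every `∂F/∂yⱼ` is again a relation among the `gⱼ`. These relations have
smaller degree, so by induction they vanish; in characteristic zero `F` is then a constant, and the
relation says this constant is zero (`eq_zero_of_aeval_eq_zero`). For `gⱼ = ∂P/∂xⱼ` the Jacobian
matrix is the Hessian of `P`, and vanishing of `F(∇P(w))` for all `w` amounts to `F(g) = 0` because
`ℂ` is infinite.
-/

open MvPolynomial

/-- Chain rule for substituting polynomials `g j` into a polynomial `F`. -/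
lemma pderiv_aeval {m : ℕ} (g : Fin m → MvPolynomial (Fin m) ℂ) (i : Fin m)
    (F : MvPolynomial (Fin m) ℂ) :
    pderiv i (aeval g F) = ∑ j, pderiv i (g j) * aeval g (pderiv j F) := by
  induction F using MvPolynomial.induction_on with
  | C a => simp [algebraMap_eq]
  | add p q hp hq => simp only [map_add, hp, hq, mul_add, Finset.sum_add_distrib]
  | mul_X p k hp =>
    simp only [map_mul, aeval_X, pderiv_mul, hp, map_add, mul_add, Finset.sum_add_distrib,
      Finset.sum_mul, pderiv_X, mul_assoc]
    congr 1
    rw [Finset.sum_eq_single k]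
    · simp [mul_comm]
    · intro j _ hj
      simp [hj.symm]
    · simp

/-- In characteristic zero, a polynomial all of whose partial derivatives vanish is constant. -/
lemma eq_C_of_pderiv_eq_zero {m : ℕ} {F : MvPolynomial (Fin m) ℂ}
    (h : ∀ j, pderiv j F = 0) : F = C (coeff 0 F) := by
  classical
  ext d
  rw [coeff_C]
  split_ifs with hd
  · rw [hd]
  · obtain ⟨j, hj⟩ : ∃ j, d j ≠ 0 := by
      by_contra! hc
      exact hd (Finsupp.ext fun j => (hc j).symm)
    have hle : Finsupp.single j 1 ≤ d := by
      rw [Finsupp.single_le_iff]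
      omega
    have hc := coeff_pderiv F (i := j) (d - Finsupp.single j 1)
    rw [h j, coeff_zero, tsub_add_cancel_of_le hle] at hc
    exact (mul_eq_zero.mp hc.symm).resolve_right (Nat.cast_add_one_ne_zero _)

/-- The Jacobian criterion. The induction is on a strict bound `n` for the degree of `F`, expressed
by the vanishing of all coefficients of degree at least `n`. -/
lemma eq_zero_of_aeval_eq_zero {m : ℕ} (g : Fin m → MvPolynomial (Fin m) ℂ)
    (hg : (Matrix.of fun i j : Fin m => pderiv i (g j)).det ≠ 0) (n : ℕ) :
    ∀ F : MvPolynomial (Fin m) ℂ, (∀ d : Fin m →₀ ℕ, n ≤ d.degree → coeff d F = 0) →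
      aeval g F = 0 → F = 0 := by
  induction n with
  | zero =>
    intro F hF _
    ext d
    simpa using hF d (Nat.zero_le _)
  | succ n ih =>
    intro F hF h0
    have hrel : (fun j => aeval g (pderiv j F)) = 0 := by
      refine Matrix.eq_zero_of_mulVec_eq_zero hg ?_
      ext1 i
      have := pderiv_aeval g i F
      rw [h0, map_zero] at this
      exact this.symm
    have hpd : ∀ j, pderiv j F = 0 := by
      intro j
      refine ih _ (fun d hd => ?_) (congrFun hrel j)
      rw [coeff_pderiv, hF _ (by simpa using hd), zero_mul]
    have hC := eq_C_of_pderiv_eq_zero hpd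
    rw [hC] at h0 ⊢
    simpa [algebraMap_eq] using h0

/-- If the Hessian determinant of `P` is not identically zero, then the image of the
gradient map of `P` is Zariski dense: any polynomial vanishing on it is zero. -/
theorem gradMap_dominant_of_hessDet_ne_zero
    (m : ℕ) (P : MvPolynomial (Fin m) ℂ) (h : hessDet m P ≠ 0) :
    ∀ F : MvPolynomial (Fin m) ℂ,
      (∀ w : Fin m → ℂ, eval (gradMap m P w) F = 0) → F = 0 := by
  intro F hF
  refine eq_zero_of_aeval_eq_zero (fun j => pderiv j P) h (F.totalDegree + 1) F ?_ ?_
  · intro d hd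
    exact coeff_eq_zero_of_totalDegree_lt hd
  · refine MvPolynomial.funext fun w => ?_
    have hid : (eval w).comp (algebraMap ℂ (MvPolynomial (Fin m) ℂ)) = RingHom.id ℂ := by
      ext a
      simp [algebraMap_eq]
    rw [map_zero, ← hF w, map_aeval, hid]
    rfl
end
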